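/- Let n ≥ 2. For all pairwise distinct i, j, k ∈ {0,…,n−1}, one has τ̃_{i,j}·τ̃_{j,k}·τ̃_{i,j} = τ̃_{j,k}·τ̃_{i,j}·τ̃_{j,k} = τ̃_{i,k} in S̃_n. -/

import Mathlib

open Equiv

/-- Generator `z` as an element of the free group. -/
def zF (n : ℕ) : FreeGroup (Fin (n-1) ⊕ Unit) := FreeGroup.of (Sum.inr ())

/-- Generator `τ̃ᵢ` as an element of the free group. -/
def tF (n : ℕ) (i : Fin (n-1)) : FreeGroup (Fin (n-1) ⊕ Unit) := FreeGroup.of (Sum.inl i)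

/-- Relations of the spin extension of the symmetric group. -/
def spinRels (n : ℕ) : Set (FreeGroup (Fin (n-1) ⊕ Unit)) :=
  {zF n * zF n} ∪
  {w | ∃ i : Fin (n-1), w = zF n * tF n i * (tF n i * zF n)⁻¹} ∪
  {w | ∃ i : Fin (n-1), w = tF n i * tF n i * (zF n)⁻¹} ∪
  {w | ∃ i j : Fin (n-1), 1 < |(i : ℤ) - (j : ℤ)| ∧ w = tF n i * tF n j * (zF n * tF n j * tF n i)⁻¹} ∪
  {w | ∃ i j : Fin (n-1), (j : ℕ) = (i : ℕ) + 1 ∧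
        w = tF n i * tF n j * tF n i * (tF n j * tF n i * tF n j)⁻¹}

/-- The spin extension `S̃ₙ` of the symmetric group, as a presented group. -/
abbrev SpinSym (n : ℕ) := PresentedGroup (spinRels n)

/-- The central element `z` of `S̃ₙ`. -/
def zt (n : ℕ) : SpinSym n := PresentedGroup.of (Sum.inr ())

/-- The generator `τ̃ᵢ` of `S̃ₙ`. -/
def tt (n : ℕ) (i : Fin (n-1)) : SpinSym n := PresentedGroup.of (Sum.inl i)

/-- `i` as an element of `Fin n`. -/
def finL (n : ℕ) (i : Fin (n-1)) : Fin n := ⟨i, by have := i.2; omega⟩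

/-- `i+1` as an element of `Fin n`. -/
def finR (n : ℕ) (i : Fin (n-1)) : Fin n := ⟨(i : ℕ) + 1, by have := i.2; omega⟩

/-- `τ̃ₖ` for a natural number index, `1` out of range. -/
def ttN (n : ℕ) (k : ℕ) : SpinSym n := if h : k < n - 1 then tt n ⟨k, h⟩ else 1

/-- For `i ≤ j`, the word `τ̃ᵢ·τ̃ᵢ₊₁⋯τ̃ⱼ₋₂·τ̃ⱼ₋₁·τ̃ⱼ₋₂⋯τ̃ᵢ₊₁·τ̃ᵢ` (equal to `1` when `i = j`). -/
def ttilCore (n i j : ℕ) : SpinSym n :=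
  (((List.range' i (j - i)) ++ (List.range' i (j - 1 - i)).reverse).map (ttN n)).prod

/-- The lifted transpositions `τ̃_{i,j}`, with `τ̃_{j,i} = z·τ̃_{i,j}` for `i < j`,
and `τ̃_{k,k} = 1`. -/
def ttil (n i j : ℕ) : SpinSym n := if j < i then zt n * ttilCore n j i else ttilCore n i j

/-!
For `g` in a group put `U_g x = g * x * g`. Since each `τ̃_k` squares to the central involution
`z`, the operators `U_{τ̃_k}` satisfy the Coxeter relations of `Sₙ`, and they act on the
`τ̃_{a,b}` through the indices alone: `U_{τ̃_k} τ̃_{a,b} = τ̃_{s_k a, s_k b}` for `a ≠ b`, where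
`s_k = (k k+1)`. As `τ̃_{i,j} = U_{τ̃_i} τ̃_{i+1,j}` for `i + 1 < j`, the identity
`U_{U_g h} = U_g U_h U_g` propagates this to `U_{τ̃_{i,j}} τ̃_{a,b} = τ̃_{(i j) a, (i j) b}`.
The two claims are the cases `(a, b) = (j, k)` of `U_{τ̃_{i,j}}` and `(a, b) = (i, j)` of
`U_{τ̃_{j,k}}`.
-/

/-- The quadratic operator `U_g : x ↦ g * x * g` of Jordan theory. On elements squaring to a central
involution it behaves like conjugation, but carries no sign on the `τ̃_{i,j}`. -/
def quadOp {M : Type*} [Mul M] (g x : M) : M := g * x * g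

lemma quadOp_quadOp {M : Type*} [Semigroup M] (g h x : M) :
    quadOp (quadOp g h) x = quadOp g (quadOp h (quadOp g x)) := by
  simp only [quadOp, mul_assoc]

lemma quadOp_mul_of_commute {M : Type*} [Semigroup M] {z g : M} (hg : Commute z g) (x : M) :
    quadOp g (z * x) = z * quadOp g x := by
  simp only [quadOp, ← mul_assoc, hg.eq]

section CentralInvolution

variable {M : Type*} [Monoid M] {z g h : M}

lemma mul_mul_cancel_of_commute (hz : z * z = 1) (hg : Commute z g) : z * g * z = g := by
  rw [hg.eq, mul_assoc, hz, mul_one]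

lemma quadOp_central_mul (hz : z * z = 1) (hc : ∀ x, Commute z x) (g x : M) :
    quadOp (z * g) x = quadOp g x := by
  calc z * g * x * (z * g) = z * (g * x) * z * g := by simp only [mul_assoc]
    _ = g * x * g := by rw [mul_mul_cancel_of_commute hz (hc _)]

lemma quadOp_involutive (hz : z * z = 1) (hc : ∀ x, Commute z x) (hg : g * g = z) :
    Function.Involutive (quadOp g) := fun x ↦
  calc g * (g * x * g) * g = g * g * x * (g * g) := by simp only [mul_assoc]
    _ = x := by rw [hg, mul_mul_cancel_of_commute hz (hc _)]

lemma quadOp_eq_self_of_anticommute (hz : z * z = 1) (hc : ∀ x, Commute z x) (hg : g * g = z)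
    (hgh : g * h = z * (h * g)) : quadOp g h = h := by
  calc g * h * g = z * h * (g * g) := by rw [hgh]; simp only [mul_assoc]
    _ = h := by rw [hg, mul_mul_cancel_of_commute hz (hc _)]

lemma quadOp_commute_of_anticommute (hz : z * z = 1) (hc : ∀ x, Commute z x)
    (hgh : g * h = z * (h * g)) : Function.Commute (quadOp g) (quadOp h) := fun x ↦ by
  have hhg : h * g = z * (g * h) := by rw [hgh, ← mul_assoc, hz, one_mul]
  calc g * (h * x * h) * g = g * h * x * (h * g) := by simp only [mul_assoc]
    _ = z * (h * g) * x * (z * (g * h)) := by rw [← hgh, ← hhg]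
    _ = z * (h * g * x) * z * (g * h) := by simp only [mul_assoc]
    _ = h * (g * x * g) * h := by
      rw [mul_mul_cancel_of_commute hz (hc _)]
      simp only [mul_assoc]

end CentralInvolution

lemma swap_apply_lt {α : Type*} [DecidableEq α] [LT α] {i j a n : α} (hi : i < n) (hj : j < n)
    (ha : a < n) : swap i j a < n := by
  rw [swap_apply_def]
  split_ifs <;> assumption

section SpinSym

variable {n : ℕ}

lemma zt_mul_self (n : ℕ) : zt n * zt n = 1 :=
  PresentedGroup.one_of_mem (rels := spinRels n) (x := zF n * zF n)
    (.inl (.inl (.inl (.inl rfl))))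

lemma zt_commute_tt (i : Fin (n - 1)) : Commute (zt n) (tt n i) :=
  PresentedGroup.mk_eq_mk_of_mul_inv_mem (rels := spinRels n) (x := zF n * tF n i)
    (y := tF n i * zF n) (.inl (.inl (.inl (.inr ⟨i, rfl⟩))))

lemma tt_mul_self (i : Fin (n - 1)) : tt n i * tt n i = zt n :=
  PresentedGroup.mk_eq_mk_of_mul_inv_mem (rels := spinRels n) (x := tF n i * tF n i)
    (y := zF n) (.inl (.inl (.inr ⟨i, rfl⟩)))

lemma tt_anticommute {i j : Fin (n - 1)} (h : 1 < |(i : ℤ) - (j : ℤ)|) :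
    tt n i * tt n j = zt n * tt n j * tt n i :=
  PresentedGroup.mk_eq_mk_of_mul_inv_mem (rels := spinRels n) (x := tF n i * tF n j)
    (y := zF n * tF n j * tF n i) (.inl (.inr ⟨i, j, h, rfl⟩))

lemma tt_braid {i j : Fin (n - 1)} (h : (j : ℕ) = (i : ℕ) + 1) :
    tt n i * tt n j * tt n i = tt n j * tt n i * tt n j :=
  PresentedGroup.mk_eq_mk_of_mul_inv_mem (rels := spinRels n)
    (x := tF n i * tF n j * tF n i) (y := tF n j * tF n i * tF n j) (.inr ⟨i, j, h, rfl⟩)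

lemma zt_commute (x : SpinSym n) : Commute (zt n) x := by
  have conj_eq_id : (MulAut.conj (zt n)).toMonoidHom = MonoidHom.id (SpinSym n) := by
    refine PresentedGroup.ext ?_
    rintro (i | _)
    · exact mul_inv_eq_of_eq_mul (zt_commute_tt i)
    · exact mul_inv_cancel_right (zt n) (zt n)
  exact mul_inv_eq_iff_eq_mul.mp (DFunLike.congr_fun conj_eq_id x)

lemma ttN_of_lt {i : ℕ} (hi : i + 1 < n) : ttN n i = tt n ⟨i, by omega⟩ :=
  dif_pos (by omega)

lemma ttN_mul_self {i : ℕ} (hi : i + 1 < n) : ttN n i * ttN n i = zt n := by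
  rw [ttN_of_lt hi, tt_mul_self]

lemma ttN_anticommute {i j : ℕ} (hij : i + 1 < j ∨ j + 1 < i) (hi : i + 1 < n) (hj : j + 1 < n) :
    ttN n i * ttN n j = zt n * (ttN n j * ttN n i) := by
  rw [ttN_of_lt hi, ttN_of_lt hj, ← mul_assoc]
  exact tt_anticommute (lt_abs.mpr (by push_cast; omega))

lemma quadOp_ttN_braid {i : ℕ} (hi : i + 2 < n) :
    quadOp (ttN n i) (ttN n (i + 1)) = quadOp (ttN n (i + 1)) (ttN n i) := by
  rw [ttN_of_lt hi, ttN_of_lt (by omega : i + 1 < n)]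
  exact tt_braid rfl

lemma quadOp_ttN_involutive {i : ℕ} (hi : i + 1 < n) : Function.Involutive (quadOp (ttN n i)) :=
  quadOp_involutive (zt_mul_self n) zt_commute (ttN_mul_self hi)

lemma quadOp_ttN_ttN_of_far {i j : ℕ} (hij : i + 1 < j ∨ j + 1 < i) (hi : i + 1 < n)
    (hj : j + 1 < n) : quadOp (ttN n i) (ttN n j) = ttN n j :=
  quadOp_eq_self_of_anticommute (zt_mul_self n) zt_commute (ttN_mul_self hi)
    (ttN_anticommute hij hi hj)

lemma quadOp_ttN_commute {i j : ℕ} (hij : i + 1 < j ∨ j + 1 < i) (hi : i + 1 < n)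
    (hj : j + 1 < n) : Function.Commute (quadOp (ttN n i)) (quadOp (ttN n j)) :=
  quadOp_commute_of_anticommute (zt_mul_self n) zt_commute (ttN_anticommute hij hi hj)

lemma ttil_of_lt {i j : ℕ} (hij : i < j) : ttil n i j = ttilCore n i j := if_neg hij.not_gt

lemma ttil_self_succ (i : ℕ) : ttil n i (i + 1) = ttN n i := by
  simp [ttil_of_lt, ttilCore]

lemma quadOp_ttN_ttil_succ {i j : ℕ} (hij : i + 1 < j) :
    quadOp (ttN n i) (ttil n (i + 1) j) = ttil n i j := by
  rw [ttil_of_lt hij, ttil_of_lt (by omega), ttilCore, ttilCore,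
    show j - i = j - (i + 1) + 1 by omega, show j - 1 - i = j - 1 - (i + 1) + 1 by omega,
    List.range'_succ, List.range'_succ]
  simp [quadOp, mul_assoc]

lemma ttil_swap {i j : ℕ} (hij : i ≠ j) : ttil n j i = zt n * ttil n i j := by
  rcases hij.lt_or_gt with h | h
  · rw [ttil_of_lt h, ttil, if_pos h]
  · rw [ttil_of_lt h, ttil, if_pos h, ← mul_assoc, zt_mul_self, one_mul]

lemma quadOp_ttN_ttil_of_left {k i j : ℕ} (hki : k + 1 < i) (hij : i ≤ j) (hj : j + 1 < n) :
    quadOp (ttN n k) (ttil n i (j + 1)) = ttil n i (j + 1) := by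
  induction hij using Nat.decreasingInduction with
  | self => rw [ttil_self_succ, quadOp_ttN_ttN_of_far (.inl hki) (by omega) hj]
  | of_succ i hij ih =>
    rw [← quadOp_ttN_ttil_succ (by omega), quadOp_ttN_commute (.inl hki) (by omega) (by omega),
      ih (by omega)]

lemma quadOp_ttN_succ_ttil {i j : ℕ} (hij : i + 1 < j) (hj : j + 1 < n) :
    quadOp (ttN n (i + 1)) (ttil n i (j + 1)) = ttil n i (j + 1) := by
  have ttil_eq : ttil n i (j + 1) =
      quadOp (quadOp (ttN n i) (ttN n (i + 1))) (ttil n (i + 2) (j + 1)) := by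
    rw [quadOp_quadOp, quadOp_ttN_ttil_of_left (by omega) (by omega) hj,
      quadOp_ttN_ttil_succ (by omega), quadOp_ttN_ttil_succ (by omega)]
  nth_rw 1 [ttil_eq]
  rw [quadOp_ttN_braid (by omega), quadOp_quadOp, quadOp_ttN_involutive (by omega),
    quadOp_ttN_ttil_succ (by omega), quadOp_ttN_ttil_succ (by omega)]

lemma quadOp_ttN_ttil_of_right {k i j : ℕ} (hik : i < k) (hij : i ≤ j) (hj : j + 1 < n)
    (hk : k + 1 < n) :
    quadOp (ttN n k) (ttil n i (j + 1)) = ttil n i (swap k (k + 1) (j + 1)) := by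
  induction hij using Nat.decreasingInduction with
  | self =>
    rcases Nat.eq_or_lt_of_le (Nat.succ_le_of_lt hik) with rfl | hjk
    · rw [swap_apply_left, ttil_self_succ, ← quadOp_ttN_braid hk, ← ttil_self_succ (j + 1),
        quadOp_ttN_ttil_succ (by omega)]
    · rw [swap_apply_of_ne_of_ne (by omega) (by omega), ttil_self_succ,
        quadOp_ttN_ttN_of_far (.inr hjk) hk hj]
  | of_succ i hij ih =>
    rcases Nat.eq_or_lt_of_le (Nat.succ_le_of_lt hik) with rfl | hik'
    · rcases Nat.eq_or_lt_of_le (Nat.succ_le_of_lt hij) with rfl | hij'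
      · rw [swap_apply_right, ttil_self_succ, ← quadOp_ttN_ttil_succ (by omega), ttil_self_succ,
          quadOp_ttN_braid (by omega), quadOp_ttN_involutive hk]
      · rw [swap_apply_of_ne_of_ne (by omega) (by omega), quadOp_ttN_succ_ttil hij' hj]
    · have lt_swap : i + 1 < swap k (k + 1) (j + 1) := by
        rw [swap_apply_def]
        split_ifs <;> omega
      rw [← quadOp_ttN_ttil_succ (by omega), quadOp_ttN_commute (.inr hik') hk (by omega),
        ih hik', quadOp_ttN_ttil_succ lt_swap]

lemma quadOp_ttN_ttil_self {i j : ℕ} (hij : i ≤ j) (hj : j + 1 < n) :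
    quadOp (ttN n i) (ttil n i (j + 1)) = ttil n (i + 1) (swap i (i + 1) (j + 1)) := by
  rcases Nat.eq_or_lt_of_le hij with rfl | hij
  · rw [swap_apply_right, ttil_swap (Nat.ne_of_lt i.lt_succ_self), ttil_self_succ, quadOp,
      ttN_mul_self hj]
  · rw [swap_apply_of_ne_of_ne (by omega) (by omega), ← quadOp_ttN_ttil_succ (by omega),
      quadOp_ttN_involutive (by omega)]

lemma quadOp_ttN_ttil_of_lt {k i j : ℕ} (hij : i < j) (hj : j < n) (hk : k + 1 < n) :
    quadOp (ttN n k) (ttil n i j) = ttil n (swap k (k + 1) i) (swap k (k + 1) j) := by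
  obtain ⟨j, rfl⟩ := Nat.exists_eq_succ_of_ne_zero (Nat.ne_zero_of_lt hij)
  replace hij := Nat.le_of_lt_succ hij
  rcases lt_trichotomy i k with hik | rfl | hki
  · rw [swap_apply_of_ne_of_ne (a := k) (x := i) (by omega) (by omega),
      quadOp_ttN_ttil_of_right hik hij hj hk]
  · rw [swap_apply_left, quadOp_ttN_ttil_self hij hj]
  · rw [swap_apply_of_ne_of_ne (x := j + 1) (by omega) (by omega)]
    rcases Nat.eq_or_lt_of_le (Nat.succ_le_of_lt hki) with rfl | hki'
    · rw [swap_apply_right, quadOp_ttN_ttil_succ (by omega)]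
    · rw [swap_apply_of_ne_of_ne (by omega) (by omega), quadOp_ttN_ttil_of_left hki' hij hj]

lemma quadOp_ttN_ttil {k a b : ℕ} (hk : k + 1 < n) (ha : a < n) (hb : b < n) (hab : a ≠ b) :
    quadOp (ttN n k) (ttil n a b) = ttil n (swap k (k + 1) a) (swap k (k + 1) b) := by
  rcases hab.lt_or_gt with h | h
  · exact quadOp_ttN_ttil_of_lt h hb hk
  · rw [ttil_swap h.ne, quadOp_mul_of_commute (zt_commute _), quadOp_ttN_ttil_of_lt h ha hk,
      ttil_swap ((swap k (k + 1)).injective.ne h.ne)]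

lemma quadOp_ttil_ttil_of_lt {i j a b : ℕ} (hij : i < j) (hj : j < n) (ha : a < n) (hb : b < n)
    (hab : a ≠ b) : quadOp (ttil n i j) (ttil n a b) = ttil n (swap i j a) (swap i j b) := by
  obtain ⟨j, rfl⟩ := Nat.exists_eq_succ_of_ne_zero (Nat.ne_zero_of_lt hij)
  replace hij := Nat.le_of_lt_succ hij
  induction hij using Nat.decreasingInduction generalizing a b with
  | self => rw [ttil_self_succ, quadOp_ttN_ttil hj ha hb hab]
  | of_succ i hij ih =>
    have hi : i + 1 < n := by omega
    have swap_eq (x : ℕ) : swap i (j + 1) x =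
        swap i (i + 1) (swap (i + 1) (j + 1) (swap i (i + 1) x)) := by
      rw [← Perm.mul_apply, ← Perm.mul_apply, swap_comm i (i + 1), swap_comm (i + 1) (j + 1),
        swap_mul_swap_mul_swap (by omega) (by omega)]
    have ha' : swap i (i + 1) a < n := swap_apply_lt (by omega) hi ha
    have hb' : swap i (i + 1) b < n := swap_apply_lt (by omega) hi hb
    have hab' : swap i (i + 1) a ≠ swap i (i + 1) b := (swap i (i + 1)).injective.ne hab
    rw [← quadOp_ttN_ttil_succ (by omega), quadOp_quadOp, quadOp_ttN_ttil hi ha hb hab,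
      ih ha' hb' hab', quadOp_ttN_ttil hi (swap_apply_lt hi hj ha') (swap_apply_lt hi hj hb')
        ((swap (i + 1) (j + 1)).injective.ne hab'), swap_eq a, swap_eq b]

lemma quadOp_ttil_ttil {i j a b : ℕ} (hi : i < n) (hj : j < n) (ha : a < n) (hb : b < n)
    (hij : i ≠ j) (hab : a ≠ b) :
    quadOp (ttil n i j) (ttil n a b) = ttil n (swap i j a) (swap i j b) := by
  rcases hij.lt_or_gt with h | h
  · exact quadOp_ttil_ttil_of_lt h hj ha hb hab
  · rw [ttil_swap h.ne, quadOp_central_mul (zt_mul_self n) zt_commute, swap_comm,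
      quadOp_ttil_ttil_of_lt h hi ha hb hab]

end SpinSym

theorem ttil_braid (n : ℕ) (hn : 2 ≤ n) (i j k : Fin n)
    (hij : i ≠ j) (hjk : j ≠ k) (hik : i ≠ k) :
    ttil n i.val j.val * ttil n j.val k.val * ttil n i.val j.val = ttil n i.val k.val ∧
    ttil n j.val k.val * ttil n i.val j.val * ttil n j.val k.val = ttil n i.val k.val := by
  have hij' := Fin.val_ne_of_ne hij
  have hjk' := Fin.val_ne_of_ne hjk
  have hik' := Fin.val_ne_of_ne hik
  constructor
  · simpa only [quadOp, swap_apply_right, swap_apply_of_ne_of_ne hik'.symm hjk'.symm] using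
      quadOp_ttil_ttil i.isLt j.isLt j.isLt k.isLt hij' hjk'
  · simpa only [quadOp, swap_apply_left, swap_apply_of_ne_of_ne hij' hik'] using
      quadOp_ttil_ttil j.isLt k.isLt i.isLt j.isLt hjk' hij'
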